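/- Let A ∈ ℂ^{n×n}. Then the first ideal GMRES approximation equals the first worst-case GMRES residual norm: inf_{α ∈ ℂ} sup_{‖v‖ = 1} ‖v − α A v‖ = sup_{‖v‖ = 1} inf_{α ∈ ℂ} ‖v − α A v‖; equivalently, inf_{α ∈ ℂ} ‖I − α A‖ = sup_{‖v‖ = 1} inf_{α ∈ ℂ} ‖v − α A v‖. -/

import Mathlib

noncomputable section

/-- Spectral (operator) norm of a matrix. -/
def opNorm {n : ℕ} (A : Matrix (Fin n) (Fin n) ℂ) : ℝ :=
  ‖Matrix.toEuclideanCLM (𝕜 := ℂ) A‖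

/-!
The identity in `v - α • A v` may be any operator `B`. Replacing `B` by `B - α₀ • A`, where `α₀`
minimises the norm, one may assume `‖B‖ ≤ ‖B - α • A‖` for all `α`. The values `⟪B v, A v⟫` at unit
vectors `v` with `r ≤ ‖B v‖` form a convex set: this is a Toeplitz–Hausdorff theorem with one
constraint, proved by rotating in the plane spanned by two vectors. In finite dimension this set is
also compact, and if it missed `0` for some `r < ‖B‖`, a separating functional would give a
direction along which `‖B - α • A‖` drops below `‖B‖`. So some unit `v` has `r ≤ ‖B v‖` and
`⟪B v, A v⟫ = 0`, and Pythagoras makes `α = 0` optimal for this `v`. In any dimension, compactness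
in `α` shows that finitely many vectors witness `r < ‖B - α • A‖` for all `α` at once, and one
restricts to their span.
-/

open Filter Topology RCLike
open scoped InnerProductSpace ComplexConjugate

section Sesquilinear

variable {𝕜 E : Type*} [RCLike 𝕜]

lemma exists_norm_eq_one_and_mul_add_conj_mul_eq_ofReal (x y : 𝕜) :
    ∃ ω : 𝕜, ‖ω‖ = 1 ∧ ∃ t : ℝ, ω * x + conj ω * y = t := by
  obtain ⟨ω, hω, h⟩ := exists_norm_eq_mul_self (x - conj y)
  refine ⟨ω, hω, ‖x - conj y‖ + 2 * re (ω * conj y), ?_⟩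
  have hre := add_conj (ω * conj y)
  rw [map_mul, conj_conj] at hre
  push_cast
  linear_combination hre - h

lemma exists_sq_add_sq_eq_one_and_sq_sub_sq_add_mul_eq_zero (t : ℝ) :
    ∃ c s : ℝ, c ^ 2 + s ^ 2 = 1 ∧ c ^ 2 - s ^ 2 + c * s * t = 0 := by
  let f : ℝ → ℝ := fun θ => Real.cos θ ^ 2 - Real.sin θ ^ 2 + Real.cos θ * Real.sin θ * t
  have hf : Continuous f := by fun_prop
  obtain ⟨θ, -, hθ⟩ : (0 : ℝ) ∈ f '' Set.Icc 0 (Real.pi / 2) :=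
    intermediate_value_Icc' (by positivity) hf.continuousOn (by simp [f])
  exact ⟨Real.cos θ, Real.sin θ, Real.cos_sq_add_sin_sq θ, hθ⟩

section Module

variable [AddCommGroup E] [Module 𝕜 E]

lemma sesquilin_smul_self (K : E →ₗ⋆[𝕜] E →ₗ[𝕜] 𝕜) (a : 𝕜) (v : E) :
    K (a • v) (a • v) = ((‖a‖ ^ 2 : ℝ) : 𝕜) * K v v := by
  simp only [map_smulₛₗ, LinearMap.smul_apply, smul_eq_mul, RingHom.id_apply]
  rw [← mul_assoc, RCLike.mul_conj, ofReal_pow]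

lemma sesquilin_rotation_add_rotation (K : E →ₗ⋆[𝕜] E →ₗ[𝕜] 𝕜) (u w : E) {c s : ℝ}
    (h : c ^ 2 + s ^ 2 = 1) :
    K ((c : 𝕜) • u + (s : 𝕜) • w) ((c : 𝕜) • u + (s : 𝕜) • w) +
      K ((c : 𝕜) • w - (s : 𝕜) • u) ((c : 𝕜) • w - (s : 𝕜) • u) = K u u + K w w := by
  have h' : (c : 𝕜) ^ 2 + (s : 𝕜) ^ 2 = 1 := by exact_mod_cast h
  simp only [map_add, map_sub, map_smulₛₗ, LinearMap.add_apply, LinearMap.sub_apply,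
    LinearMap.smul_apply, smul_eq_mul, conj_ofReal, RingHom.id_apply]
  linear_combination (K u u + K w w) * h'

lemma exists_isotropic_pair (N : E →ₗ⋆[𝕜] E →ₗ[𝕜] 𝕜) {u w : E} (h : N u u + N w w = 0) :
    ∃ p q : E, N p p = 0 ∧ N q q = 0 ∧
      ∀ K : E →ₗ⋆[𝕜] E →ₗ[𝕜] 𝕜, K p p + K q q = K u u + K w w := by
  obtain hu | hu := eq_or_ne (N u u) 0
  · exact ⟨u, w, hu, by rwa [hu, zero_add] at h, fun _ => rfl⟩
  obtain ⟨ω, hω, t, ht⟩ :=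
    exists_norm_eq_one_and_mul_add_conj_mul_eq_ofReal (N u w / N u u) (N w u / N u u)
  obtain ⟨c, s, hcs, hcst⟩ := exists_sq_add_sq_eq_one_and_sq_sub_sq_add_mul_eq_zero t
  have hphase (K : E →ₗ⋆[𝕜] E →ₗ[𝕜] 𝕜) : K (ω • w) (ω • w) = K w w := by
    rw [sesquilin_smul_self, hω, one_pow, ofReal_one, one_mul]
  have hcross : N u (ω • w) + N (ω • w) u = N u u * t := by
    rw [← ht]
    simp only [map_smulₛₗ, LinearMap.smul_apply, smul_eq_mul, RingHom.id_apply]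
    field_simp
  set p : E := (c : 𝕜) • u + (s : 𝕜) • ω • w
  set q : E := (c : 𝕜) • ω • w - (s : 𝕜) • u
  have hsum (K : E →ₗ⋆[𝕜] E →ₗ[𝕜] 𝕜) : K p p + K q q = K u u + K w w := by
    rw [sesquilin_rotation_add_rotation K u (ω • w) hcs, hphase]
  have hp : N p p = 0 := by
    have hcst' : (c : 𝕜) ^ 2 - (s : 𝕜) ^ 2 + c * s * t = 0 := by exact_mod_cast hcst
    have hww : N (ω • w) (ω • w) = -N u u := by
      rw [hphase]
      exact eq_neg_of_add_eq_zero_right h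
    calc N p p = (c : 𝕜) ^ 2 * N u u + (s : 𝕜) ^ 2 * N (ω • w) (ω • w) +
          c * s * (N u (ω • w) + N (ω • w) u) := by
          simp only [p, map_add, map_smulₛₗ _ (ofReal _), LinearMap.add_apply,
            LinearMap.smul_apply, smul_eq_mul, conj_ofReal, RingHom.id_apply]
          ring
      _ = 0 := by
          rw [hww, hcross]
          linear_combination N u u * hcst'
  exact ⟨p, q, hp, by simpa only [hp, h, zero_add] using hsum N, hsum⟩

end Module

variable [NormedAddCommGroup E] [InnerProductSpace 𝕜 E]

lemma exists_ne_zero_isotropic_nonneg (N H : E →ₗ⋆[𝕜] E →ₗ[𝕜] 𝕜) {u w : E} (huw : u ≠ 0 ∨ w ≠ 0)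
    (hN : N u u + N w w = 0) (hHu : 0 ≤ re (H u u)) (hHw : 0 ≤ re (H w w)) :
    ∃ v : E, v ≠ 0 ∧ N v v = 0 ∧ 0 ≤ re (H v v) := by
  obtain ⟨p, q, hp, hq, hsum⟩ := exists_isotropic_pair N hN
  have hH : re (H p p) + re (H q q) = re (H u u) + re (H w w) := by
    rw [← map_add, ← map_add, hsum]
  have hpq : p ≠ 0 ∨ q ≠ 0 := by
    by_contra! h
    have hinner := congrArg re (hsum (innerₛₗ 𝕜))
    simp only [innerₛₗ_apply_apply, h.1, h.2, add_zero, map_add, map_zero,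
      inner_self_eq_norm_sq] at hinner
    rcases huw with h0 | h0 <;> nlinarith [norm_pos_iff.2 h0, sq_nonneg ‖u‖, sq_nonneg ‖w‖]
  by_cases hp' : p ≠ 0 ∧ 0 ≤ re (H p p)
  · exact ⟨p, hp'.1, hp, hp'.2⟩
  have hHp : re (H p p) ≤ 0 := by
    by_contra! hpos
    exact hp' ⟨by rintro rfl; simp at hpos, hpos.le⟩
  refine ⟨q, ?_, hq, by linarith⟩
  rintro rfl
  have hH0 : re (H (0 : E) 0) = 0 := by simp
  exact hp' ⟨hpq.resolve_right (not_not_intro rfl), by linarith⟩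

/-- The values of the sesquilinear form `N` at those unit vectors at which the quadratic form of
`H` has nonnegative real part; for `H = 0` this is the classical numerical range of `N`. -/
def constrainedNumericalRange (N H : E →ₗ⋆[𝕜] E →ₗ[𝕜] 𝕜) : Set 𝕜 :=
  {z | ∃ v : E, ‖v‖ = 1 ∧ 0 ≤ re (H v v) ∧ N v v = z}

lemma mem_constrainedNumericalRange_of_ne_zero {N H : E →ₗ⋆[𝕜] E →ₗ[𝕜] 𝕜} {v : E} {z : 𝕜}
    (hv : v ≠ 0) (hN : N v v = z * ‖v‖ ^ 2) (hH : 0 ≤ re (H v v)) :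
    z ∈ constrainedNumericalRange N H := by
  have hnorm : (‖v‖ : 𝕜) ≠ 0 := by simpa using hv
  have hscale (K : E →ₗ⋆[𝕜] E →ₗ[𝕜] 𝕜) :
      K ((‖v‖⁻¹ : 𝕜) • v) ((‖v‖⁻¹ : 𝕜) • v) = (((‖v‖ ^ 2)⁻¹ : ℝ) : 𝕜) * K v v := by
    rw [sesquilin_smul_self, norm_inv, norm_ofReal, abs_norm, inv_pow]
  refine ⟨(‖v‖⁻¹ : 𝕜) • v, norm_smul_inv_norm hv, ?_, ?_⟩
  · rw [hscale, re_ofReal_mul]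
    positivity
  · rw [hscale, hN]
    push_cast
    field_simp

theorem convex_constrainedNumericalRange (N H : E →ₗ⋆[𝕜] E →ₗ[𝕜] 𝕜) :
    Convex ℝ (constrainedNumericalRange N H) := by
  rintro _ ⟨u, hu, hHu, rfl⟩ _ ⟨w, hw, hHw, rfl⟩ a b ha hb hab
  set z : 𝕜 := a • N u u + b • N w w with hz
  have hsqrt (K : E →ₗ⋆[𝕜] E →ₗ[𝕜] 𝕜) {x : ℝ} (hx : 0 ≤ x) (v : E) :
      K ((√x : 𝕜) • v) ((√x : 𝕜) • v) = x * K v v := by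
    rw [sesquilin_smul_self, norm_ofReal, sq_abs, Real.sq_sqrt hx]
  have hne : (√a : 𝕜) • u ≠ 0 ∨ (√b : 𝕜) • w ≠ 0 := by
    have hu0 : u ≠ 0 := by rintro rfl; simp at hu
    have hw0 : w ≠ 0 := by rintro rfl; simp at hw
    simp only [ne_eq, smul_eq_zero, ofReal_eq_zero, Real.sqrt_eq_zero ha, Real.sqrt_eq_zero hb,
      hu0, hw0, or_false]
    by_contra! h
    simp [h.1, h.2] at hab
  let M : E →ₗ⋆[𝕜] E →ₗ[𝕜] 𝕜 := N - z • innerₛₗ 𝕜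
  have hM : M ((√a : 𝕜) • u) ((√a : 𝕜) • u) + M ((√b : 𝕜) • w) ((√b : 𝕜) • w) = 0 := by
    have hab' : (a : 𝕜) + b = 1 := by exact_mod_cast hab
    rw [hsqrt _ ha, hsqrt _ hb]
    simp only [M, LinearMap.sub_apply, LinearMap.smul_apply, innerₛₗ_apply_apply,
      inner_self_eq_norm_sq_to_K, hu, hw, smul_eq_mul, map_one, one_pow, mul_one]
    rw [real_smul_eq_coe_mul, real_smul_eq_coe_mul] at hz
    linear_combination -hz - z * hab'
  have hH {x : ℝ} (hx : 0 ≤ x) {v : E} (hv : 0 ≤ re (H v v)) :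
      0 ≤ re (H ((√x : 𝕜) • v) ((√x : 𝕜) • v)) := by
    rw [hsqrt _ hx, re_ofReal_mul]
    positivity
  obtain ⟨v, hv, hMv, hHv⟩ := exists_ne_zero_isotropic_nonneg M H hne hM (hH ha hHu) (hH hb hHw)
  refine mem_constrainedNumericalRange_of_ne_zero hv ?_ hHv
  simpa [M, sub_eq_zero, inner_self_eq_norm_sq_to_K] using hMv

end Sesquilinear

section CoerciveLine

variable {𝕜 G : Type*} [NormedField 𝕜] [ProperSpace 𝕜] [NormedAddCommGroup G] [NormedSpace 𝕜 G]

lemma tendsto_norm_sub_smul_cocompact_atTop (x : G) {y : G} (hy : y ≠ 0) :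
    Tendsto (fun a : 𝕜 => ‖x - a • y‖) (cocompact 𝕜) atTop := by
  have hlin : Tendsto (fun a : 𝕜 => ‖a‖ * ‖y‖ - ‖x‖) (cocompact 𝕜) atTop :=
    tendsto_atTop_add_const_right _ _
      ((tendsto_norm_cocompact_atTop (E := 𝕜)).atTop_mul_const (norm_pos_iff.2 hy))
  refine tendsto_atTop_mono (fun a => ?_) hlin
  rw [← norm_smul, norm_sub_rev]
  exact norm_sub_norm_le (a • y) x

lemma exists_forall_norm_sub_smul_le (x y : G) :
    ∃ a₀ : 𝕜, ∀ a : 𝕜, ‖x - a₀ • y‖ ≤ ‖x - a • y‖ := by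
  obtain rfl | hy := eq_or_ne y 0
  · exact ⟨0, by simp⟩
  · exact Continuous.exists_forall_le (by fun_prop) (tendsto_norm_sub_smul_cocompact_atTop x hy)

lemma isCompact_setOf_norm_sub_smul_le (x : G) {y : G} (hy : y ≠ 0) (r : ℝ) :
    IsCompact {a : 𝕜 | ‖x - a • y‖ ≤ r} := by
  obtain ⟨K, hK, hsub⟩ := mem_cocompact.1
    ((tendsto_norm_sub_smul_cocompact_atTop (𝕜 := 𝕜) x hy).eventually_gt_atTop r)
  refine hK.of_isClosed_subset (isClosed_le (by fun_prop) continuous_const)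
    fun a (ha : ‖x - a • y‖ ≤ r) => ?_
  by_contra haK
  exact ha.not_gt (hsub haK)

end CoerciveLine

section OperatorNorm

variable {𝕜 E F : Type*} [DenselyNormedField 𝕜]
variable [NormedAddCommGroup E] [NormedSpace 𝕜 E] [NormedAddCommGroup F] [NormedSpace 𝕜 F]

lemma sSup_norm_apply_of_norm_eq_one [NormedAlgebra ℝ 𝕜] (T : E →L[𝕜] F) :
    sSup {y | ∃ v, ‖v‖ = 1 ∧ y = ‖T v‖} = ‖T‖ := by
  rw [← T.sSup_sphere_eq_norm]
  congr 1
  ext y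
  simp [eq_comm]

lemma exists_finset_forall_exists_lt_norm_sub_smul_apply [ProperSpace 𝕜] (A B : E →L[𝕜] F) {r : ℝ}
    (hr : ∀ a : 𝕜, r < ‖B - a • A‖) :
    ∃ s : Finset E, ∀ a : 𝕜, ∃ v ∈ s, ‖v‖ ≤ 1 ∧ r < ‖(B - a • A) v‖ := by
  classical
  have hwit (a : 𝕜) : ∃ v, ‖v‖ ≤ 1 ∧ r < ‖(B - a • A) v‖ :=
    ((B - a • A).exists_lt_apply_of_lt_opNorm (hr a)).imp fun _ h => ⟨h.1.le, h.2⟩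
  obtain rfl | hA := eq_or_ne A 0
  · obtain ⟨v, hv⟩ := hwit 0
    exact ⟨{v}, by simpa using hv⟩
  obtain ⟨w, hw, hAw⟩ := A.exists_lt_apply_of_lt_opNorm (norm_pos_iff.2 hA)
  let bad (v : E) : Set 𝕜 := {a | ‖B v - a • A v‖ ≤ r}
  have hbad : bad w ∩ ⋂ v : Metric.closedBall (0 : E) 1, bad v = ∅ := by
    refine Set.eq_empty_of_forall_notMem fun a ha => ?_
    obtain ⟨v, hv, hlt⟩ := hwit a
    exact hlt.not_ge (Set.mem_iInter.1 ha.2 ⟨v, by simpa using hv⟩)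
  obtain ⟨s, hs⟩ := (isCompact_setOf_norm_sub_smul_le (B w) (norm_pos_iff.1 hAw)
    r).elim_finite_subfamily_closed _ (fun _ => isClosed_le (by fun_prop) continuous_const) hbad
  refine ⟨insert w (s.image (↑)), fun a => ?_⟩
  by_contra! h
  refine Set.eq_empty_iff_forall_notMem.1 hs a
    ⟨h w (by simp) hw.le, Set.mem_iInter₂.2 fun v hv => ?_⟩
  exact h v (Finset.mem_insert_of_mem (Finset.mem_image_of_mem _ hv))
    (mem_closedBall_zero_iff.1 v.2)

end OperatorNorm

section Infimum

variable {ι V : Type*} [SeminormedAddGroup V] (f : ι → V)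

lemma sInf_setOf_exists_eq_norm_nonneg : 0 ≤ sInf {x | ∃ i, x = ‖f i‖} :=
  Real.sInf_nonneg (by rintro _ ⟨i, rfl⟩; exact norm_nonneg _)

lemma sInf_setOf_exists_eq_norm_le (i : ι) : sInf {x | ∃ j, x = ‖f j‖} ≤ ‖f i‖ :=
  csInf_le ⟨0, by rintro _ ⟨j, rfl⟩; exact norm_nonneg _⟩ ⟨i, rfl⟩

variable {f} in
lemma le_sInf_setOf_exists_eq_norm [Nonempty ι] {r : ℝ} (h : ∀ i, r ≤ ‖f i‖) :
    r ≤ sInf {x | ∃ i, x = ‖f i‖} :=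
  le_csInf ⟨_, Classical.arbitrary ι, rfl⟩ (by rintro _ ⟨i, rfl⟩; exact h i)

end Infimum

section Pencil

variable {𝕜 E F : Type*} [RCLike 𝕜]
variable [NormedAddCommGroup E] [InnerProductSpace 𝕜 E]
variable [NormedAddCommGroup F] [InnerProductSpace 𝕜 F]

lemma convex_setOf_inner_apply (A B : E →ₗ[𝕜] F) {r : ℝ} (hr : 0 ≤ r) :
    Convex ℝ {z : 𝕜 | ∃ v : E, ‖v‖ = 1 ∧ r ≤ ‖B v‖ ∧ ⟪B v, A v⟫_𝕜 = z} := by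
  let form (T S : E →ₗ[𝕜] F) : E →ₗ⋆[𝕜] E →ₗ[𝕜] 𝕜 := ((innerₛₗ 𝕜).comp T).compl₂ S
  let H : E →ₗ⋆[𝕜] E →ₗ[𝕜] 𝕜 := form B B - ((r ^ 2 : ℝ) : 𝕜) • innerₛₗ 𝕜
  have hH {v : E} (hv : ‖v‖ = 1) : re (H v v) = ‖B v‖ ^ 2 - r ^ 2 := by
    simp only [H, form, LinearMap.sub_apply, LinearMap.smul_apply, smul_eq_mul, map_sub,
      re_ofReal_mul, LinearMap.compl₂_apply, LinearMap.comp_apply, innerₛₗ_apply_apply,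
      inner_self_eq_norm_sq, hv]
    ring
  convert convex_constrainedNumericalRange (form B A) H using 1
  ext z
  refine exists_congr fun v => and_congr_right fun hv => and_congr_left fun _ => ?_
  rw [hH hv, sub_nonneg, sq_le_sq₀ hr (norm_nonneg _)]

lemma isCompact_setOf_inner_apply [FiniteDimensional 𝕜 E] (A B : E →L[𝕜] F) (r : ℝ) :
    IsCompact {z : 𝕜 | ∃ v : E, ‖v‖ = 1 ∧ r ≤ ‖B v‖ ∧ ⟪B v, A v⟫_𝕜 = z} := by
  have := FiniteDimensional.proper 𝕜 E
  have hclosed : IsClosed {v : E | r ≤ ‖B v‖} := isClosed_le continuous_const (by fun_prop)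
  convert ((isCompact_sphere (0 : E) 1).inter_right hclosed).image
    (f := fun v => ⟪B v, A v⟫_𝕜) (by fun_prop) using 1
  ext z
  simp [and_assoc]

lemma norm_sub_ofReal_smul_sq (x y : F) (t : ℝ) :
    ‖x - (t : 𝕜) • y‖ ^ 2 = ‖x‖ ^ 2 - 2 * t * re ⟪x, y⟫_𝕜 + t ^ 2 * ‖y‖ ^ 2 := by
  rw [norm_sub_sq (𝕜 := 𝕜), inner_smul_right, re_ofReal_mul, norm_smul, norm_ofReal, mul_pow,
    sq_abs]
  ring

lemma exists_norm_sub_smul_lt_of_lt_re_inner {A B : E →L[𝕜] F} {r δ : ℝ} (hr : 0 ≤ r)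
    (hrB : r < ‖B‖) (hδ : 0 < δ)
    (h : ∀ v, ‖v‖ = 1 → r ≤ ‖B v‖ → δ ≤ re ⟪B v, A v⟫_𝕜) :
    ∃ a : 𝕜, ‖B - a • A‖ < ‖B‖ := by
  obtain ⟨t, ht0, htr, htδ⟩ : ∃ t : ℝ, 0 < t ∧ r + t * ‖A‖ < ‖B‖ ∧ t * ‖A‖ ^ 2 < δ := by
    have hlim₁ : Tendsto (fun t : ℝ => r + t * ‖A‖) (𝓝[>] 0) (𝓝 r) :=
      (Continuous.tendsto' (by fun_prop) _ _ (by simp)).mono_left nhdsWithin_le_nhds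
    have hlim₂ : Tendsto (fun t : ℝ => t * ‖A‖ ^ 2) (𝓝[>] 0) (𝓝 0) :=
      (Continuous.tendsto' (by fun_prop) _ _ (by simp)).mono_left nhdsWithin_le_nhds
    exact (eventually_mem_nhdsWithin.and
      ((hlim₁.eventually_lt_const hrB).and (hlim₂.eventually_lt_const hδ))).exists
  have hmax : max (r + t * ‖A‖) √(‖B‖ ^ 2 - t * δ) < ‖B‖ := by
    refine max_lt htr ((Real.sqrt_lt' (hr.trans_lt hrB)).2 ?_)
    linarith [mul_pos ht0 hδ]
  refine ⟨t, hmax.trans_le' ?_⟩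
  refine ContinuousLinearMap.opNorm_le_of_unit_norm
    (le_max_of_le_right (Real.sqrt_nonneg _)) fun v hv => ?_
  have hAv : ‖A v‖ ≤ ‖A‖ := A.unit_le_opNorm v hv.le
  obtain hBv | hBv := lt_or_ge ‖B v‖ r
  · refine le_max_of_le_left ?_
    calc ‖(B - (t : 𝕜) • A) v‖ ≤ ‖B v‖ + ‖(t : 𝕜) • A v‖ := norm_sub_le _ _
      _ ≤ r + t * ‖A‖ := by
        rw [norm_smul, norm_ofReal, abs_of_pos ht0]
        gcongr
  · refine le_max_of_le_right (Real.le_sqrt_of_sq_le ?_)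
    have hBv' : ‖B v‖ ≤ ‖B‖ := B.unit_le_opNorm v hv.le
    calc ‖(B - (t : 𝕜) • A) v‖ ^ 2
        = ‖B v‖ ^ 2 - 2 * t * re ⟪B v, A v⟫_𝕜 + t ^ 2 * ‖A v‖ ^ 2 :=
          norm_sub_ofReal_smul_sq (B v) (A v) t
      _ ≤ ‖B‖ ^ 2 - 2 * t * δ + t ^ 2 * ‖A‖ ^ 2 := by
        gcongr
        exact h v hv hBv
      _ = ‖B‖ ^ 2 - 2 * t * δ + t * (t * ‖A‖ ^ 2) := by ring
      _ ≤ ‖B‖ ^ 2 - 2 * t * δ + t * δ := by gcongr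
      _ = ‖B‖ ^ 2 - t * δ := by ring

theorem exists_inner_eq_zero_of_forall_norm_le [FiniteDimensional 𝕜 E] {A B : E →L[𝕜] F}
    (h : ∀ a : 𝕜, ‖B‖ ≤ ‖B - a • A‖) {r : ℝ} (hr : 0 ≤ r) (hrB : r < ‖B‖) :
    ∃ v, ‖v‖ = 1 ∧ r ≤ ‖B v‖ ∧ ⟪B v, A v⟫_𝕜 = 0 := by
  by_contra hzero
  obtain ⟨f, δ, hδ, hf⟩ := RCLike.geometric_hahn_banach_point_closed (𝕜 := 𝕜)
    (convex_setOf_inner_apply (A : E →ₗ[𝕜] F) B hr)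
    (isCompact_setOf_inner_apply A B r).isClosed hzero
  rw [map_zero, map_zero] at hδ
  obtain ⟨a, ha⟩ := exists_norm_sub_smul_lt_of_lt_re_inner (A := f 1 • A) hr hrB hδ
    fun v hv hBv => by
      have hfv := hf _ ⟨v, hv, hBv, rfl⟩
      rw [← mul_one ⟪_, _⟫_𝕜, ← smul_eq_mul, map_smul, smul_eq_mul, mul_comm] at hfv
      rw [smul_apply, inner_smul_right]
      exact hfv.le
  rw [smul_smul] at ha
  exact ha.not_ge (h _)

lemma norm_le_norm_sub_smul_of_inner_eq_zero {x y : F} (h : ⟪x, y⟫_𝕜 = 0) (a : 𝕜) :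
    ‖x‖ ≤ ‖x - a • y‖ := by
  refine le_of_sq_le_sq ?_ (norm_nonneg _)
  rw [norm_sub_sq (𝕜 := 𝕜), inner_smul_right, h, mul_zero, map_zero, mul_zero, sub_zero]
  exact le_add_of_nonneg_right (sq_nonneg _)

lemma exists_forall_le_norm_sub_smul_apply_of_finiteDimensional [FiniteDimensional 𝕜 E]
    (A B : E →L[𝕜] F) {r : ℝ} (hr : 0 ≤ r) (h : ∀ a : 𝕜, r < ‖B - a • A‖) :
    ∃ v, ‖v‖ = 1 ∧ ∀ a : 𝕜, r ≤ ‖B v - a • A v‖ := by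
  obtain ⟨a₀, hmin⟩ := exists_forall_norm_sub_smul_le (𝕜 := 𝕜) B A
  obtain ⟨v, hv, hrv, horth⟩ := exists_inner_eq_zero_of_forall_norm_le (B := B - a₀ • A) (A := A)
    (fun a => by rw [sub_sub, ← add_smul]; exact hmin _) hr (h a₀)
  refine ⟨v, hv, fun a => hrv.trans ?_⟩
  simpa [sub_sub, ← add_smul] using norm_le_norm_sub_smul_of_inner_eq_zero horth (a - a₀)

theorem exists_forall_le_norm_sub_smul_apply (A B : E →L[𝕜] F) {r : ℝ} (hr : 0 ≤ r)
    (h : ∀ a : 𝕜, r < ‖B - a • A‖) :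
    ∃ v, ‖v‖ = 1 ∧ ∀ a : 𝕜, r ≤ ‖B v - a • A v‖ := by
  obtain ⟨s, hs⟩ := exists_finset_forall_exists_lt_norm_sub_smul_apply A B h
  let V : Submodule 𝕜 E := Submodule.span 𝕜 s
  have hV (a : 𝕜) : r < ‖B ∘L V.subtypeL - a • A ∘L V.subtypeL‖ := by
    obtain ⟨v, hvs, hv, hlt⟩ := hs a
    exact hlt.trans_le ((B ∘L V.subtypeL - a • A ∘L V.subtypeL).unit_le_opNorm
      ⟨v, Submodule.subset_span hvs⟩ hv)
  obtain ⟨v, hv, hle⟩ := exists_forall_le_norm_sub_smul_apply_of_finiteDimensional _ _ hr hV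
  exact ⟨v, hv, hle⟩

theorem sInf_norm_sub_smul_eq_sSup_sInf (A B : E →L[𝕜] F) :
    sInf {x | ∃ a : 𝕜, x = ‖B - a • A‖} =
      sSup {x | ∃ v : E, ‖v‖ = 1 ∧ x = sInf {y | ∃ a : 𝕜, y = ‖B v - a • A v‖}} := by
  have hle {v : E} (hv : ‖v‖ = 1) (a : 𝕜) :
      sInf {y | ∃ a : 𝕜, y = ‖B v - a • A v‖} ≤ ‖B - a • A‖ :=
    (sInf_setOf_exists_eq_norm_le _ a).trans ((B - a • A).unit_le_opNorm v hv.le)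
  apply le_antisymm
  · refine le_of_forall_lt_imp_le_of_dense fun r hr => ?_
    obtain hr0 | hr0 := lt_or_ge r 0
    · refine hr0.le.trans (Real.sSup_nonneg ?_)
      rintro _ ⟨v, -, rfl⟩
      exact sInf_setOf_exists_eq_norm_nonneg _
    obtain ⟨v, hv, hrv⟩ := exists_forall_le_norm_sub_smul_apply A B hr0
      fun a => hr.trans_le (sInf_setOf_exists_eq_norm_le _ a)
    refine le_csSup_of_le ⟨‖B - (0 : 𝕜) • A‖, ?_⟩ ⟨v, hv, rfl⟩ (le_sInf_setOf_exists_eq_norm hrv)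
    rintro _ ⟨w, hw, rfl⟩
    exact hle hw 0
  · refine Real.sSup_le ?_ (sInf_setOf_exists_eq_norm_nonneg _)
    rintro _ ⟨v, hv, rfl⟩
    exact le_sInf_setOf_exists_eq_norm (hle hv)

end Pencil

theorem ideal_eq_worst_case_step_one_general {𝕜 E F : Type*} [RCLike 𝕜]
    [NormedAddCommGroup E] [InnerProductSpace 𝕜 E] [NormedAddCommGroup F] [InnerProductSpace 𝕜 F]
    (A B : E →L[𝕜] F) :
    sInf {x | ∃ α : 𝕜, x = sSup {y | ∃ v : E, ‖v‖ = 1 ∧ y = ‖B v - α • A v‖}} =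
      sSup {x | ∃ v : E, ‖v‖ = 1 ∧ x = sInf {y | ∃ α : 𝕜, y = ‖B v - α • A v‖}} ∧
    sInf {x | ∃ α : 𝕜, x = ‖B - α • A‖} =
      sSup {x | ∃ v : E, ‖v‖ = 1 ∧ x = sInf {y | ∃ α : 𝕜, y = ‖B v - α • A v‖}} := by
  have hsup (α : 𝕜) : sSup {y | ∃ v : E, ‖v‖ = 1 ∧ y = ‖B v - α • A v‖} = ‖B - α • A‖ :=
    sSup_norm_apply_of_norm_eq_one (B - α • A)
  simpa only [hsup, and_self] using sInf_norm_sub_smul_eq_sSup_sInf A B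

theorem ideal_eq_worst_case_step_one {n : ℕ} (A : Matrix (Fin n) (Fin n) ℂ) :
    -- inf_α sup_{‖v‖=1} ‖v − αAv‖ = sup_{‖v‖=1} inf_α ‖v − αAv‖
    sInf {x | ∃ α : ℂ, x = sSup {y | ∃ v : EuclideanSpace ℂ (Fin n), ‖v‖ = 1 ∧
        y = ‖v - α • Matrix.toEuclideanLin A v‖}}
      = sSup {x | ∃ v : EuclideanSpace ℂ (Fin n), ‖v‖ = 1 ∧
        x = sInf {y | ∃ α : ℂ, y = ‖v - α • Matrix.toEuclideanLin A v‖}} ∧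
    -- equivalently, inf_α ‖I − αA‖ = sup_{‖v‖=1} inf_α ‖v − αAv‖
    sInf {x | ∃ α : ℂ, x = opNorm (1 - α • A)}
      = sSup {x | ∃ v : EuclideanSpace ℂ (Fin n), ‖v‖ = 1 ∧
        x = sInf {y | ∃ α : ℂ, y = ‖v - α • Matrix.toEuclideanLin A v‖}} := by
  simp only [opNorm, map_sub, map_one, map_smul]
  exact ideal_eq_worst_case_step_one_general (Matrix.toEuclideanCLM (𝕜 := ℂ) A) 1
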